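/- Let k be a positive integer, N a positive integer, and ν a positive integer with ν > Nk/6. Then any Jacobi form of weight k and index Nν that vanishes to order at least ν (in q) is identically zero; that is, J_{k,Nν}(ν) = {0}. -/

import Mathlib

open Complex

/-- A Jacobi form of weight `k` and index `m`: a function on `ℍ × ℂ` with the
Jacobi transformation laws, given by an absolutely convergent Fourier expansion
`φ(τ,z) = Σ c(n,r) e(nτ + rz)` supported on `4mn − r² ≥ 0`. -/
structure JacobiForm (k m : ℕ) where
  toFun : ℂ → ℂ → ℂ
  coeff : ℕ → ℤ → ℂ
  modular : ∀ γ : Matrix.SpecialLinearGroup (Fin 2) ℤ, ∀ τ z : ℂ, 0 < τ.im →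
    toFun ((γ.1 0 0 * τ + γ.1 0 1) / (γ.1 1 0 * τ + γ.1 1 1))
        (z / (γ.1 1 0 * τ + γ.1 1 1)) =
      (γ.1 1 0 * τ + γ.1 1 1) ^ k *
        Complex.exp (2 * Real.pi * I * m * γ.1 1 0 * z ^ 2 / (γ.1 1 0 * τ + γ.1 1 1)) *
        toFun τ z
  elliptic : ∀ (lam mu : ℤ) (τ z : ℂ), 0 < τ.im →
    toFun τ (z + lam * τ + mu) =
      Complex.exp (-(2 * Real.pi * I * m) * ((lam : ℂ) ^ 2 * τ + 2 * lam * z)) * toFun τ z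
  fourier : ∀ τ z : ℂ, 0 < τ.im →
    HasSum (fun p : ℕ × ℤ =>
      coeff p.1 p.2 * Complex.exp (2 * Real.pi * I * (p.1 * τ + p.2 * z))) (toFun τ z)
  support : ∀ (n : ℕ) (r : ℤ), 4 * (m : ℤ) * n < r ^ 2 → coeff n r = 0

open UpperHalfPlane hiding I
open Filter Asymptotics
open scoped Matrix MatrixGroups Modular Manifold Real

/-! Restrict a Jacobi form `φ` to the sections `z = λτ + μ` through the `t`-torsion points of the
elliptic curve. Up to constants of modulus one, `SL(2, ℤ)` permutes these restrictions with weight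
`k`, so their product over the nonzero `t`-torsion points has weight `k (t² - 1)`. The support
condition `r² ≤ 4mn` and the vanishing of `φ` to order `ν` make the product vanish at infinity to
order at least `t² ν² / (2m) - ν`. When `mk < 6ν²` this exceeds `k (t² - 1) / 12` for large odd `t`,
so the product vanishes, hence so does one of the restrictions. By `SL(2, ℤ)`-equivariance the
section can be taken to be `z = g / t` with `0 < g < t`. As `t` runs over the large primes, the
entire function `z ↦ φ(τ, z)` acquires infinitely many zeros in a compact set, so `φ = 0`. -/

theorem eq_const_of_isMaxOn_norm {f : ℍ → ℂ} (hf : MDiff f) {c : ℍ}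
    (hc : IsMaxOn (norm ∘ f) Set.univ c) (τ : ℍ) : f τ = f c := by
  have hmax : IsMaxOn (norm ∘ f ∘ ofComplex) {z | 0 < z.im} c := fun z _ ↦ by
    simpa using isMaxOn_univ_iff.1 hc (ofComplex z)
  simpa using eqOn_of_isPreconnected_of_isMaxOn_norm (convex_halfSpace_im_gt 0).isPreconnected
    isOpen_upperHalfPlaneSet (mdifferentiable_iff.1 hf) c.im_pos hmax τ.im_pos

theorem eq_zero_of_norm_smul_eq_of_isZeroAtImInfty {f : ℍ → ℂ} (hf : MDiff f)
    (hinv : ∀ (γ : SL(2, ℤ)) (τ : ℍ), ‖f (γ • τ)‖ = ‖f τ‖) (hzero : IsZeroAtImInfty f) :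
    f = 0 := by
  by_contra! hne
  obtain ⟨τ₀, hτ₀⟩ := Function.ne_iff.1 hne
  have hpos : 0 < ‖f τ₀‖ := norm_pos_iff.2 hτ₀
  obtain ⟨A, hA⟩ := isZeroAtImInfty_iff.1 hzero _ (half_pos hpos)
  have hsmall_or : ∀ τ, ‖f τ‖ < ‖f τ₀‖ ∨
      ∃ σ ∈ ModularGroup.truncatedFundamentalDomain A, ‖f σ‖ = ‖f τ‖ := fun τ ↦ by
    obtain ⟨γ, hγ⟩ := ModularGroup.exists_smul_mem_fd τ
    rcases le_total A (γ • τ).im with hle | hle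
    · exact .inl (hinv γ τ ▸ (hA _ hle).trans_lt (half_lt_self hpos))
    · exact .inr ⟨γ • τ, ⟨hγ, hle⟩, hinv γ τ⟩
  obtain ⟨σ₀, hσ₀, hσ₀_eq⟩ := (hsmall_or τ₀).resolve_left (lt_irrefl _)
  obtain ⟨c, -, hc⟩ := (ModularGroup.isCompact_truncatedFundamentalDomain A).exists_isMaxOn
    ⟨σ₀, hσ₀⟩ hf.continuous.norm.continuousOn
  have hc₀ : ‖f τ₀‖ ≤ ‖f c‖ := hσ₀_eq ▸ hc hσ₀
  have hmax : IsMaxOn (norm ∘ f) Set.univ c := isMaxOn_univ_iff.2 fun τ ↦ by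
    rcases hsmall_or τ with hlt | ⟨σ, hσ, hσ_eq⟩
    · exact hlt.le.trans hc₀
    · exact hσ_eq.symm.trans_le (hc hσ)
  obtain ⟨τ, hτ⟩ := (hzero.eventually (Metric.ball_mem_nhds 0 hpos)).exists
  rw [eq_const_of_isMaxOn_norm hf hmax, dist_zero_right] at hτ
  exact hτ.not_ge hc₀

theorem discriminant_smul (γ : SL(2, ℤ)) (τ : ℍ) :
    ModularForm.discriminant (γ • τ) = denom γ τ ^ 12 * ModularForm.discriminant τ :=
  SlashInvariantForm.slash_action_eqn'' CuspForm.discriminant (MonoidHom.mem_range.2 ⟨γ, rfl⟩) τ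

theorem eq_zero_of_norm_smul_eq_of_isBigO {f : ℍ → ℂ} {k : ℕ} {d : ℝ} (hf : MDiff f)
    (hmod : ∀ (γ : SL(2, ℤ)) (τ : ℍ), ‖f (γ • τ)‖ = ‖denom γ τ‖ ^ k * ‖f τ‖)
    (hdecay : f =O[atImInfty] fun τ ↦ rexp (-2 * π * d * τ.im)) (hd : k < 12 * d) : f = 0 := by
  -- Comparing `f ^ 12` with `Δ ^ k` reduces the claim to weight zero.
  have hΔ : ∀ τ, ModularForm.discriminant τ ^ k ≠ 0 := fun τ ↦
    pow_ne_zero _ (ModularForm.discriminant_ne_zero τ)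
  have hdiff : MDiff fun τ ↦ f τ ^ 12 / ModularForm.discriminant τ ^ k :=
    MDifferentiable.div (hf.pow 12) (MDifferentiable.pow CuspForm.discriminant.holo' k) hΔ
  have hinv : ∀ (γ : SL(2, ℤ)) (τ : ℍ),
      ‖f (γ • τ) ^ 12 / ModularForm.discriminant (γ • τ) ^ k‖ =
        ‖f τ ^ 12 / ModularForm.discriminant τ ^ k‖ := fun γ τ ↦ by
    simp only [norm_div, norm_pow, hmod, discriminant_smul, norm_mul]
    rw [mul_pow, mul_pow, ← pow_mul, ← pow_mul, mul_comm k 12]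
    exact mul_div_mul_left _ _ (pow_ne_zero _ (norm_ne_zero_iff.2 (denom_ne_zero _ τ)))
  have hzero : IsZeroAtImInfty fun τ ↦ f τ ^ 12 / ModularForm.discriminant τ ^ k := by
    have hO : (fun τ ↦ f τ ^ 12 / ModularForm.discriminant τ ^ k) =O[atImInfty]
        fun τ ↦ rexp (-2 * π * d * τ.im) ^ 12 / rexp (-2 * π * τ.im) ^ k := by
      simp only [div_eq_mul_inv]
      exact (hdecay.pow 12).mul ((ModularForm.exp_isBigO_discriminant.pow k).inv_rev
        (.of_forall fun τ h ↦ absurd h (by positivity)))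
    refine hO.trans_tendsto ?_
    have hlim : Tendsto (fun y : ℝ ↦ rexp (-(2 * π * (12 * d - k)) * y)) atTop (nhds 0) :=
      Real.tendsto_exp_atBot.comp <| tendsto_id.const_mul_atTop_of_neg <|
        neg_lt_zero.2 (mul_pos Real.two_pi_pos (sub_pos.2 hd))
    refine (hlim.comp tendsto_comap).congr fun τ ↦ ?_
    rw [Function.comp_apply, ← Real.exp_nat_mul, ← Real.exp_nat_mul, ← Real.exp_sub]
    push_cast
    ring_nf
  funext τ
  have hτ := congrFun (eq_zero_of_norm_smul_eq_of_isZeroAtImInfty hdiff hinv hzero) τ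
  exact pow_eq_zero_iff (by simp) |>.1 <| (div_eq_zero_iff.1 hτ).resolve_right (hΔ τ)

theorem eq_zero_of_infinite_inter_preimage_zero {f : ℂ → ℂ} (hf : Differentiable ℂ f) {K : Set ℂ}
    (hK : IsCompact K) (hinf : (K ∩ f ⁻¹' {0}).Infinite) : f = 0 := by
  obtain ⟨z, -, hz⟩ := hinf.exists_accPt_of_subset_isCompact hK Set.inter_subset_left
  have hanalytic : AnalyticOnNhd ℂ f Set.univ := fun w _ ↦ hf.analyticAt w
  have hfreq := (accPt_iff_frequently_nhdsNE.1 hz).mono fun _ ↦ And.right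
  exact funext fun w ↦ hanalytic.eqOn_zero_of_preconnected_of_frequently_eq_zero
    isPreconnected_univ (Set.mem_univ z) hfreq (Set.mem_univ w)

theorem hasSum_fourierCoeff {T : ℝ} [Fact (0 < T)] {ι : Type*} [Countable ι] {a : ι → ℂ}
    {h : ι → ℤ} {f : AddCircle T → ℂ} (ha : Summable fun i ↦ ‖a i‖)
    (hf : ∀ x, HasSum (fun i ↦ a i * fourier (h i) x) (f x)) (j : ℤ) :
    HasSum (fun i ↦ if h i = j then a i else 0) (fourierCoeff f j) := by
  have hterm : ∀ i, fourierCoeff (fun x : AddCircle T ↦ a i * fourier (h i) x) j =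
      if h i = j then a i else 0 := fun i ↦ by
    simp [fourierCoeff.const_mul, fourierCoeff_fourier, Pi.single_apply, eq_comm, -fourier_apply]
  have hf_coeff : fourierCoeff f j = ∫ x, ∑' i, fourier (-j) x • (a i * fourier (h i) x)
      ∂AddCircle.haarAddCircle :=
    MeasureTheory.integral_congr_ae (.of_forall fun x ↦ ((hf x).const_smul _).tsum_eq.symm)
  simp only [← hterm, hf_coeff]
  exact MeasureTheory.hasSum_integral_of_summable_integral_norm
    (fun i ↦ Continuous.integrable_of_hasCompactSupport (by fun_prop) (.of_compactSpace _))
    (by simpa [Circle.norm_coe] using ha)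

theorem max_sub_le_quadratic {m ν n r l : ℝ} (hm : 0 < m) (hνm : ν ≤ m) (hn : ν ≤ n)
    (hr : r ^ 2 ≤ 4 * m * n) (hl : |l| ≤ 1) :
    max (ν - 2 * m * |l|) 0 ≤ n + r * l + m * l ^ 2 := by
  have hsquare : (|r| - 2 * m * |l|) ^ 2 ≤ 4 * m * (n - |r| * |l| + m * |l| ^ 2) := by
    linear_combination hr + sq_abs r
  suffices h : max (ν - 2 * m * |l|) 0 ≤ n - |r| * |l| + m * |l| ^ 2 by
    refine h.trans ?_
    rw [sq_abs, ← abs_mul]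
    linarith [neg_abs_le (r * l)]
  refine max_le ?_ (nonneg_of_mul_nonneg_right ((sq_nonneg _).trans hsquare) (by positivity))
  rcases le_total |r| (2 * m) with hsmall | hlarge
  · linarith [mul_le_mul_of_nonneg_right hsmall (abs_nonneg l), mul_nonneg hm.le (sq_nonneg |l|)]
  · have hmono : (2 * m * (1 - |l|)) ^ 2 ≤ (|r| - 2 * m * |l|) ^ 2 := by
      have := mul_nonneg hm.le (sub_nonneg.2 hl)
      gcongr ?_ ^ 2
      linarith
    have hm_sq : m * (1 - |l|) ^ 2 ≤ n - |r| * |l| + m * |l| ^ 2 :=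
      le_of_mul_le_mul_left (a := 4 * m) (by linarith) (by positivity)
    linarith [mul_nonneg hm.le (sq_nonneg |l|)]

theorem sum_Icc_neg_sub_mul_abs {K : Type*} [Field K] [LinearOrder K] [IsStrictOrderedRing K]
    (b c : K) (A : ℕ) :
    ∑ i ∈ Finset.Icc (-A : ℤ) A, (b - c * |(i : K)|) = (2 * A + 1) * b - c * A * (A + 1) := by
  induction A with
  | zero => simp
  | succ A ih =>
    rw [Nat.cast_succ, Finset.Icc_succ_succ, Finset.sum_union (by simp),
      Finset.sum_pair (by lia), ih]
    have hA : (0 : K) ≤ A + 1 := by positivity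
    push_cast
    rw [abs_neg, abs_of_nonneg hA]
    ring

theorem sq_div_le_sum_Icc_neg_sub_mul_abs {b c : ℝ} (hb : 0 ≤ b) (hc : 0 < c) :
    b ^ 2 / c ≤ ∑ i ∈ Finset.Icc (-⌊b / c⌋₊ : ℤ) ⌊b / c⌋₊, (b - c * |(i : ℝ)|) := by
  set A := ⌊b / c⌋₊
  have hA_le : A * c ≤ b := (le_div_iff₀ hc).1 (Nat.floor_le (by positivity))
  have hA_lt : b < (A + 1) * c := (div_lt_iff₀ hc).1 (Nat.lt_floor_add_one _)
  have hgap : 0 ≤ (b - A * c) * ((A + 1) * c - b) :=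
    mul_nonneg (sub_nonneg.2 hA_le) (sub_nonneg.2 hA_lt.le)
  rw [sum_Icc_neg_sub_mul_abs, div_le_iff₀ hc]
  linear_combination hgap

theorem sum_Icc_neg_le_sum_valMinAbs {t A : ℕ} [NeZero t] (hA : 2 * A < t) {f : ℤ → ℝ}
    (hf : ∀ i, 0 ≤ f i) :
    ∑ i ∈ Finset.Icc (-A : ℤ) A, f i ≤ ∑ a : ZMod t, f a.valMinAbs := by
  have hcast : ∀ i ∈ Finset.Icc (-A : ℤ) A, (i : ZMod t).valMinAbs = i := fun i hi ↦ by
    rw [Finset.mem_Icc] at hi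
    exact (ZMod.valMinAbs_spec _ _).2 ⟨rfl, by constructor <;> lia⟩
  have hinj : Set.InjOn ((↑) : ℤ → ZMod t) (Finset.Icc (-A : ℤ) A) :=
    Set.LeftInvOn.injOn (f₁' := ZMod.valMinAbs) hcast
  calc ∑ i ∈ Finset.Icc (-A : ℤ) A, f i
      = ∑ a ∈ (Finset.Icc (-A : ℤ) A).image ((↑) : ℤ → ZMod t), f a.valMinAbs := by
        rw [Finset.sum_image hinj]
        exact Finset.sum_congr rfl fun i hi ↦ by rw [hcast i hi]
    _ ≤ ∑ a : ZMod t, f a.valMinAbs :=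
        Finset.sum_le_univ_sum_of_nonneg fun _ ↦ hf _

theorem mul_sq_div_le_sum_max_sub {t : ℕ} [NeZero t] (ht : Odd t) {m ν : ℝ} (hm : 0 < m)
    (hν : 0 ≤ ν) (hνm : ν ≤ m) :
    t * ν ^ 2 / (2 * m) ≤ ∑ a : ZMod t, max (ν - 2 * m * |(a.valMinAbs / t : ℝ)|) 0 := by
  have ht_pos : (0 : ℝ) < t := mod_cast NeZero.pos t
  have hfloor : 2 * ⌊ν / (2 * m / t)⌋₊ < t := by
    have hle : (2 * ⌊ν / (2 * m / t)⌋₊ : ℝ) ≤ t := calc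
      _ ≤ 2 * (ν / (2 * m / t)) := by gcongr; exact Nat.floor_le (by positivity)
      _ = ν / m * t := by field_simp
      _ ≤ t := mul_le_of_le_one_left ht_pos.le (div_le_one_of_le₀ hνm hm.le)
    exact lt_of_le_of_ne (mod_cast hle) fun h ↦
      Nat.not_even_iff_odd.2 ht (h ▸ even_two_mul _)
  calc t * ν ^ 2 / (2 * m) = ν ^ 2 / (2 * m / t) := by field_simp
    _ ≤ _ := sq_div_le_sum_Icc_neg_sub_mul_abs hν (by positivity)
    _ ≤ ∑ i ∈ Finset.Icc (-⌊ν / (2 * m / t)⌋₊ : ℤ) ⌊ν / (2 * m / t)⌋₊,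
        max (ν - 2 * m * |(i / t : ℝ)|) 0 := by
      refine Finset.sum_le_sum fun i _ ↦ (le_of_eq ?_).trans (le_max_left _ _)
      rw [abs_div, abs_of_pos ht_pos]
      ring
    _ ≤ _ := sum_Icc_neg_le_sum_valMinAbs hfloor fun _ ↦ le_max_right _ _

theorem linear_moebius_add_eq_div {K : Type*} [Field K] (x y a b : K) {c d τ : K}
    (hdenom : c * τ + d ≠ 0) :
    x * ((a * τ + b) / (c * τ + d)) + y =
      ((x * a + y * c) * τ + (x * b + y * d)) / (c * τ + d) := by
  rw [eq_div_iff hdenom, add_mul, mul_assoc, div_mul_cancel₀ _ hdenom]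
  ring

theorem quadratic_moebius_add_eq {K : Type*} [Field K] (x y : K) {a b c d τ : K}
    (hdenom : c * τ + d ≠ 0) (hdet : a * d - b * c = 1) :
    x ^ 2 * ((a * τ + b) / (c * τ + d)) + x * y +
        c * ((x * a + y * c) * τ + (x * b + y * d)) ^ 2 / (c * τ + d) =
      (x * a + y * c) ^ 2 * τ + (x * a + y * c) * (x * b + y * d) := by
  rw [← mul_div_assoc, add_right_comm, ← add_div, ← eq_sub_iff_add_eq, div_eq_iff hdenom]
  linear_combination (-x ^ 2 * (a * τ + b) - x * y * (c * τ + d)) * hdet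

theorem exists_vecMul_eq_gcd (p : Fin 2 → ℤ) :
    ∃ γ : SL(2, ℤ), p ᵥ* γ.1 = ![0, (Int.gcd (p 0) (p 1) : ℤ)] := by
  rcases eq_or_ne p 0 with rfl | hp
  · exact ⟨1, funext (Fin.forall_fin_two.2 ⟨by simp, by simp⟩)⟩
  have hgcd : 0 < Int.gcd (p 0) (p 1) := Int.gcd_pos_iff.2 <| by
    contrapose! hp
    exact funext (Fin.forall_fin_two.2 hp)
  obtain ⟨a, b, hab, ha, hb⟩ := Int.exists_gcd_one hgcd
  obtain ⟨γ, hγ₀, hγ₁⟩ := (Int.isCoprime_iff_gcd_eq_one.2 hab).symm.neg_right.exists_SL2_col 0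
  have hdet := γ.1.det_fin_two.symm.trans γ.2
  rw [hγ₀, hγ₁] at hdet
  refine ⟨γ, funext (Fin.forall_fin_two.2 ⟨?_, ?_⟩)⟩
  · simp only [Matrix.vecMul, dotProduct, Fin.sum_univ_two, hγ₀, hγ₁, Matrix.cons_val_zero]
    linear_combination b * ha - a * hb
  · simp only [Matrix.vecMul, dotProduct, Fin.sum_univ_two, Matrix.cons_val_one,
      Matrix.cons_val_fin_one]
    linear_combination γ.1 0 1 * ha + γ.1 1 1 * hb + Int.gcd (p 0) (p 1) * hdet

theorem bijective_vecMul_map_intCast (t : ℕ) [NeZero t] (γ : SL(2, ℤ)) :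
    Function.Bijective fun x : Fin 2 → ZMod t ↦ x ᵥ* γ.1.map (↑) := by
  refine Finite.injective_iff_bijective.1 (Matrix.vecMul_injective_of_isUnit ?_)
  rw [Matrix.isUnit_iff_isUnit_det, ← Int.cast_det, γ.2]
  simp

/-- The `t`-torsion point `x` of `ℝ² / ℤ²`, lifted to `ℝ²`. The lift uses the representatives of
least absolute value: vanishing orders at infinity are estimated by `max_sub_le_quadratic`, which
is effective only near `0`. -/
noncomputable def torsionPoint {t : ℕ} (x : Fin 2 → ZMod t) : Fin 2 → ℝ :=
  fun i ↦ (x i).valMinAbs / t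

theorem abs_torsionPoint_le_one {t : ℕ} [NeZero t] (x : Fin 2 → ZMod t) (i : Fin 2) :
    |torsionPoint x i| ≤ 1 := by
  have hle : ((x i).valMinAbs.natAbs : ℝ) ≤ t :=
    mod_cast (ZMod.natAbs_valMinAbs_le _).trans (Nat.div_le_self _ _)
  rw [torsionPoint, abs_div, Nat.abs_cast, ← Int.cast_abs, ← Nat.cast_natAbs]
  exact div_le_one_of_le₀ hle t.cast_nonneg

theorem exists_div_eq_torsionPoint_add {t : ℕ} [NeZero t] (p : Fin 2 → ℤ) :
    ∃ l : Fin 2 → ℤ,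
      (fun i ↦ (p i / t : ℝ)) = torsionPoint ((↑) ∘ p : Fin 2 → ZMod t) + (↑) ∘ l := by
  have hdvd (i) : (t : ℤ) ∣ p i - (p i : ZMod t).valMinAbs :=
    (ZMod.intCast_eq_intCast_iff_dvd_sub ..).1 (ZMod.coe_valMinAbs _)
  choose l hl using hdvd
  refine ⟨l, funext fun i ↦ ?_⟩
  have ht : (t : ℝ) ≠ 0 := NeZero.ne _
  have hli : (p i - (p i : ZMod t).valMinAbs : ℝ) = t * l i := mod_cast hl i
  simp only [torsionPoint, Pi.add_apply, Function.comp_apply]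
  rw [div_add' _ _ _ ht]
  congr 1
  linear_combination hli

theorem torsionPoint_vecMul_map_intCast {t : ℕ} (x : Fin 2 → ZMod t)
    (M : Matrix (Fin 2) (Fin 2) ℤ) :
    torsionPoint x ᵥ* M.map (↑) =
      fun j ↦ ((((fun i ↦ (x i).valMinAbs) ᵥ* M) j : ℝ) / t) := by
  funext j
  simp only [torsionPoint, Matrix.vecMul, dotProduct, Matrix.map_apply, Int.cast_sum,
    Int.cast_mul, Finset.sum_div, div_mul_eq_mul_div]

theorem weight_lt_sum_max_sub_torsionPoint {k m t ν : ℕ} [NeZero t] (ht : Odd t) (hνm : ν ≤ m)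
    (hmk : m * k < 6 * ν ^ 2) (htν : 12 * m * ν < t ^ 2) :
    k * (t ^ 2 - 1 : ℝ) <
      12 * ∑ x ∈ ({0}ᶜ : Finset (Fin 2 → ZMod t)), max (ν - 2 * m * |torsionPoint x 0|) 0 := by
  have hm : (0 : ℝ) < m := mod_cast Nat.pos_of_ne_zero fun hm ↦ by simp_all
  have hsum : ∑ x ∈ ({0}ᶜ : Finset (Fin 2 → ZMod t)), max (ν - 2 * m * |torsionPoint x 0|) 0 =
      t * ∑ a : ZMod t, max (ν - 2 * m * |(a.valMinAbs / t : ℝ)|) 0 - ν := by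
    rw [Finset.compl_singleton, Finset.sum_erase_eq_sub (Finset.mem_univ _),
      ← (finTwoArrowEquiv (ZMod t)).symm.sum_comp, Fintype.sum_prod_type]
    simp [torsionPoint, Finset.mul_sum]
  have hsum_ge := mul_sq_div_le_sum_max_sub ht hm ν.cast_nonneg (mod_cast hνm)
  rw [div_le_iff₀ (by positivity)] at hsum_ge
  have hmk_succ : (m * k + 1 : ℝ) ≤ 6 * ν ^ 2 := mod_cast hmk
  have htν_cast : (12 * m * ν : ℝ) < t ^ 2 := mod_cast htν
  rw [hsum]
  set S := ∑ a : ZMod t, max (ν - 2 * m * |(a.valMinAbs / t : ℝ)|) 0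
  refine lt_of_mul_lt_mul_left ?_ hm.le
  have hmk_nonneg : (0 : ℝ) ≤ m * k := by positivity
  calc m * (k * (t ^ 2 - 1 : ℝ)) ≤ (m * k + 1) * t ^ 2 - t ^ 2 := by linarith
    _ ≤ 6 * ν ^ 2 * t ^ 2 - t ^ 2 := by gcongr
    _ = 6 * t * (t * ν ^ 2) - t ^ 2 := by ring
    _ ≤ 6 * t * (S * (2 * m)) - t ^ 2 := by gcongr
    _ < 6 * t * (S * (2 * m)) - 12 * m * ν := by gcongr
    _ = m * (12 * (t * S - ν)) := by ring

namespace JacobiForm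

variable {k m : ℕ} (φ : JacobiForm k m)

theorem norm_fourier_term (p : ℕ × ℤ) (τ z : ℂ) :
    ‖φ.coeff p.1 p.2 * cexp (2 * π * I * (p.1 * τ + p.2 * z))‖ =
      ‖φ.coeff p.1 p.2‖ * rexp (-2 * π * (p.1 * τ.im + p.2 * z.im)) := by
  simp [norm_exp]

theorem summable_norm_coeff_mul_exp {v : ℝ} (hv : 0 < v) (y : ℝ) :
    Summable fun p : ℕ × ℤ ↦ ‖φ.coeff p.1 p.2‖ * rexp (-2 * π * (p.1 * v + p.2 * y)) := by
  refine (φ.fourier (v * I) (y * I) (by simpa)).summable.norm.congr fun p ↦ ?_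
  rw [norm_fourier_term]
  simp

theorem norm_fourier_term_le {v Y : ℝ} {τ z : ℂ} (hτ : v ≤ τ.im) (hz : |z.im| ≤ Y) (p : ℕ × ℤ) :
    ‖φ.coeff p.1 p.2 * cexp (2 * π * I * (p.1 * τ + p.2 * z))‖ ≤
      ‖φ.coeff p.1 p.2‖ * rexp (-2 * π * (p.1 * v + p.2 * Y)) +
        ‖φ.coeff p.1 p.2‖ * rexp (-2 * π * (p.1 * v + p.2 * -Y)) := by
  rw [norm_fourier_term, ← mul_add]
  gcongr ?_ * ?_
  obtain ⟨hz_neg, hz_pos⟩ := abs_le.1 hz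
  have hn : (p.1 : ℝ) * v ≤ p.1 * τ.im := by gcongr
  rcases le_total 0 (p.2 : ℝ) with hr | hr
  · have hrz : (p.2 : ℝ) * -Y ≤ p.2 * z.im := by gcongr
    refine le_add_of_nonneg_of_le (Real.exp_pos _).le (Real.exp_le_exp.2 ?_)
    nlinarith [Real.pi_pos]
  · have hrz : (p.2 : ℝ) * Y ≤ p.2 * z.im := mul_le_mul_of_nonpos_left hz_pos hr
    refine le_add_of_le_of_nonneg (Real.exp_le_exp.2 ?_) (Real.exp_pos _).le
    nlinarith [Real.pi_pos]

theorem differentiableOn_toFun_comp {U : Set ℂ} {g h : ℂ → ℂ} (hU : IsOpen U)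
    (hg : DifferentiableOn ℂ g U) (hh : DifferentiableOn ℂ h U) (hpos : ∀ w ∈ U, 0 < (g w).im) :
    DifferentiableOn ℂ (fun w ↦ φ.toFun (g w) (h w)) U := by
  intro w₀ hw₀
  obtain ⟨v, hv, hvw⟩ := exists_between (hpos w₀ hw₀)
  obtain ⟨Y, hY⟩ := exists_gt |(h w₀).im|
  have hV_open : IsOpen (U ∩ {w | v < (g w).im ∧ |(h w).im| < Y}) :=
    ((continuous_im.comp_continuousOn hg.continuousOn).prodMk
      (continuous_im.comp_continuousOn hh.continuousOn).abs).isOpen_inter_preimage hU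
      (isOpen_Ioi.prod isOpen_Iio)
  have hsum : DifferentiableOn ℂ (fun w ↦ ∑' p : ℕ × ℤ,
      φ.coeff p.1 p.2 * cexp (2 * π * I * (p.1 * g w + p.2 * h w)))
      (U ∩ {w | v < (g w).im ∧ |(h w).im| < Y}) :=
    differentiableOn_tsum_of_summable_norm
      ((φ.summable_norm_coeff_mul_exp hv Y).add (φ.summable_norm_coeff_mul_exp hv (-Y)))
      (fun p ↦ by
        have := hg.mono (Set.inter_subset_left (t := {w | v < (g w).im ∧ |(h w).im| < Y}))
        have := hh.mono (Set.inter_subset_left (t := {w | v < (g w).im ∧ |(h w).im| < Y}))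
        fun_prop)
      hV_open fun p w hw ↦ φ.norm_fourier_term_le hw.2.1.le hw.2.2.le p
  have hφ := hsum.congr fun w hw ↦ (φ.fourier (g w) (h w) (hpos w hw.1)).tsum_eq.symm
  exact (hφ.differentiableAt (hV_open.mem_nhds ⟨hw₀, hvw, hY⟩)).differentiableWithinAt

theorem coeff_eq_zero_of_toFun_eq_zero (hφ : ∀ τ z : ℂ, 0 < τ.im → φ.toFun τ z = 0)
    (n : ℕ) (r : ℤ) : φ.coeff n r = 0 := by
  set b : ℕ × ℤ → ℂ := fun p ↦ φ.coeff p.1 p.2 * cexp (2 * π * I * (p.1 * I)) with hb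
  have hb_summable : Summable fun p ↦ ‖b p‖ := by
    simpa [hb] using (φ.fourier I 0 (by simp)).summable.norm
  have hdouble : ∀ x y : UnitAddCircle,
      HasSum (fun p ↦ b p * _root_.fourier p.1 x * _root_.fourier p.2 y) 0 := fun x y ↦ by
    induction x using QuotientAddGroup.induction_on with | H u =>
    induction y using QuotientAddGroup.induction_on with | H v =>
    have huv := φ.fourier (u + I) v (by simp)
    rw [hφ _ _ (by simp)] at huv
    convert huv using 2 with p
    simp only [hb, fourier_coe_apply, mul_assoc, ← Complex.exp_add]
    congr 2
    push_cast
    ring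
  have hsingle : ∀ x : UnitAddCircle,
      HasSum (fun p ↦ (if p.2 = r then b p else 0) * _root_.fourier p.1 x) 0 := fun x ↦ by
    simpa [fourierCoeff, ite_mul] using hasSum_fourierCoeff
      (a := fun p ↦ b p * _root_.fourier p.1 x) (f := 0)
      (by simpa [Circle.norm_coe] using hb_summable) (hdouble x) r
  have hpoint := hasSum_fourierCoeff (f := 0) (.of_nonneg_of_le (fun _ ↦ norm_nonneg _)
    (fun p ↦ by split_ifs <;> simp) hb_summable) hsingle n
  have hb_single : HasSum (fun p ↦ if p = (n, r) then b p else 0) 0 := by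
    simpa [fourierCoeff, Prod.ext_iff, ite_and] using hpoint
  have hb_zero : b (n, r) = 0 := by
    simpa using (hasSum_single (n, r) fun p hp ↦ if_neg hp).unique hb_single
  simpa [hb] using hb_zero

theorem max_sub_le_of_coeff_ne_zero {ν : ℕ} (hm : 0 < m) (hνm : ν ≤ m)
    (horder : ∀ (n : ℕ) (r : ℤ), n < ν → φ.coeff n r = 0) {l : ℝ} (hl : |l| ≤ 1) {n : ℕ} {r : ℤ}
    (hnr : φ.coeff n r ≠ 0) : max (ν - 2 * m * |l|) 0 ≤ n + r * l + m * l ^ 2 :=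
  max_sub_le_quadratic (mod_cast hm) (mod_cast hνm)
    (mod_cast not_lt.1 fun hlt ↦ hnr (horder n r hlt))
    (mod_cast not_lt.1 fun hlt ↦ hnr (φ.support n r hlt)) hl

/-- The restriction of `φ` to the section `z = v₀ τ + v₁` of the universal elliptic curve, with the
exponential factor of Eichler and Zagier that makes the `SL(2, ℤ)`-action on these restrictions
the action on row vectors `v`. -/
noncomputable def specialization (v : Fin 2 → ℝ) (τ : ℍ) : ℂ :=
  cexp (2 * π * I * m * (v 0 ^ 2 * τ + v 0 * v 1)) * φ.toFun τ (v 0 * τ + v 1)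

theorem mdifferentiable_specialization (v : Fin 2 → ℝ) : MDiff (φ.specialization v) := by
  have hdiff : DifferentiableOn ℂ (fun w : ℂ ↦ cexp (2 * π * I * m * (v 0 ^ 2 * w + v 0 * v 1)) *
      φ.toFun w (v 0 * w + v 1)) {w | 0 < w.im} :=
    .mul (by fun_prop) <|
      φ.differentiableOn_toFun_comp isOpen_upperHalfPlaneSet (by fun_prop) (by fun_prop) fun _ ↦ id
  refine mdifferentiable_iff.2 (hdiff.congr fun w hw ↦ ?_)
  simp [specialization, ofComplex_apply_of_im_pos hw]

theorem hasSum_specialization (v : Fin 2 → ℝ) (τ : ℍ) :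
    HasSum (fun p : ℕ × ℤ ↦ φ.coeff p.1 p.2 *
      cexp (2 * π * I * ((p.1 + p.2 * v 0 + m * v 0 ^ 2) * τ + (p.2 + m * v 0) * v 1)))
      (φ.specialization v τ) := by
  refine ((φ.fourier τ (v 0 * τ + v 1) τ.im_pos).mul_left _).congr_fun fun p ↦ ?_
  rw [mul_left_comm, ← Complex.exp_add]
  ring_nf

theorem isBigO_specialization {o : ℝ} {v : Fin 2 → ℝ}
    (ho : ∀ n r, φ.coeff n r ≠ 0 → o ≤ n + r * v 0 + m * v 0 ^ 2) :
    φ.specialization v =O[atImInfty] fun τ ↦ rexp (-2 * π * o * τ.im) := by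
  have hsum : Summable fun p : ℕ × ℤ ↦
      ‖φ.coeff p.1 p.2‖ * rexp (-2 * π * (p.1 + p.2 * v 0 + m * v 0 ^ 2)) := by
    refine ((φ.summable_norm_coeff_mul_exp one_pos (v 0)).mul_right
      (rexp (-2 * π * (m * v 0 ^ 2)))).congr fun p ↦ ?_
    rw [mul_assoc, ← Real.exp_add]
    ring_nf
  set D := ∑' p : ℕ × ℤ, ‖φ.coeff p.1 p.2‖ * rexp (-2 * π * (p.1 + p.2 * v 0 + m * v 0 ^ 2))
  have hbound : ∀ τ : ℍ, 1 ≤ τ.im →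
      ‖φ.specialization v τ‖ ≤ D * rexp (-2 * π * o * (τ.im - 1)) := fun τ hτ ↦ by
    rw [← (φ.hasSum_specialization v τ).tsum_eq]
    refine tsum_of_norm_bounded (hsum.hasSum.mul_right _) fun p ↦ ?_
    by_cases hp : φ.coeff p.1 p.2 = 0
    · simp [hp]
    have hexponent := mul_le_mul_of_nonneg_right (ho _ _ hp) (sub_nonneg.2 hτ)
    have hre : (2 * π * I * ((p.1 + p.2 * v 0 + m * v 0 ^ 2) * τ + (p.2 + m * v 0) * v 1)).re =
        -(2 * π * ((p.1 + p.2 * v 0 + m * v 0 ^ 2) * τ.im)) := by simp [pow_two]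
    rw [norm_mul, norm_exp, hre, mul_assoc ‖_‖, ← Real.exp_add]
    gcongr
    linarith [mul_le_mul_of_nonneg_left hexponent Real.two_pi_pos.le]
  refine .of_bound (D * rexp (2 * π * o)) ?_
  filter_upwards [tendsto_comap.eventually_ge_atTop 1] with τ hτ
  refine (hbound τ hτ).trans_eq ?_
  rw [mul_assoc D, Real.norm_of_nonneg (Real.exp_pos _).le, ← Real.exp_add]
  ring_nf

theorem specialization_zero_left (u : ℝ) (τ : ℍ) :
    φ.specialization ![0, u] τ = φ.toFun τ u := by
  simp [specialization]

theorem specialization_smul (v : Fin 2 → ℝ) (γ : SL(2, ℤ)) (τ : ℍ) :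
    φ.specialization v (γ • τ) =
      denom γ τ ^ k * φ.specialization (v ᵥ* γ.1.map (↑)) τ := by
  have hmod := φ.modular γ τ ((v ᵥ* γ.1.map (↑)) 0 * τ + (v ᵥ* γ.1.map (↑)) 1) τ.im_pos
  have hdenom := denom_ne_zero γ τ
  have hdet : (γ.1 0 0 : ℂ) * γ.1 1 1 - γ.1 0 1 * γ.1 1 0 = 1 := mod_cast γ.1.det_fin_two ▸ γ.2
  simp only [specialization, UpperHalfPlane.coe_specialLinearGroup_apply, ModularGroup.denom_apply,
    Matrix.vecMul, dotProduct, Fin.sum_univ_two, Matrix.map_apply, eq_intCast] at hmod hdenom ⊢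
  push_cast at hmod hdenom ⊢
  have hz := linear_moebius_add_eq_div (v 0 : ℂ) (v 1) (γ.1 0 0) (γ.1 0 1) hdenom
  have hexponent := quadratic_moebius_add_eq (v 0 : ℂ) (v 1) hdenom hdet
  rw [hz, hmod, ← hexponent]
  simp only [mul_add, Complex.exp_add]
  ring_nf

theorem norm_specialization_add_intCast (v : Fin 2 → ℝ) (l : Fin 2 → ℤ) (τ : ℍ) :
    ‖φ.specialization (v + (↑) ∘ l) τ‖ = ‖φ.specialization v τ‖ := by
  have helliptic := φ.elliptic (l 0) (l 1) τ (v 0 * τ + v 1) τ.im_pos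
  have harg : ((v 0 + l 0 : ℝ) : ℂ) * τ + (v 1 + l 1 : ℝ) =
      (v 0 * τ + v 1) + l 0 * τ + l 1 := by
    push_cast
    ring
  have hexponent : 2 * π * I * m * ((v 0 + l 0 : ℝ) ^ 2 * τ + (v 0 + l 0 : ℝ) * (v 1 + l 1 : ℝ)) +
      -(2 * π * I * m) * (l 0 ^ 2 * τ + 2 * l 0 * (v 0 * τ + v 1)) =
      2 * π * I * m * (v 0 ^ 2 * τ + v 0 * v 1) +
        (2 * π * m * (v 0 * l 1 - l 0 * v 1 + l 0 * l 1) : ℝ) * I := by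
    push_cast
    ring
  simp only [specialization, Pi.add_apply, Function.comp_apply]
  rw [harg, helliptic, ← mul_assoc, ← Complex.exp_add, hexponent, Complex.exp_add, norm_mul,
    norm_mul, norm_exp_ofReal_mul_I, mul_one, norm_mul]

theorem norm_specialization_torsionPoint_smul {t : ℕ} [NeZero t] (x : Fin 2 → ZMod t)
    (γ : SL(2, ℤ)) (τ : ℍ) :
    ‖φ.specialization (torsionPoint x) (γ • τ)‖ =
      ‖denom γ τ‖ ^ k * ‖φ.specialization (torsionPoint (x ᵥ* γ.1.map (↑))) τ‖ := by
  obtain ⟨l, hl⟩ := exists_div_eq_torsionPoint_add (t := t) ((fun i ↦ (x i).valMinAbs) ᵥ* γ.1)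
  have hx : ((↑) ∘ ((fun i ↦ (x i).valMinAbs) ᵥ* γ.1) : Fin 2 → ZMod t) = x ᵥ* γ.1.map (↑) := by
    funext j
    simp [Matrix.vecMul, dotProduct]
  rw [specialization_smul, torsionPoint_vecMul_map_intCast, hl, hx, norm_mul, norm_pow,
    norm_specialization_add_intCast]

theorem exists_specialization_torsionPoint_eq_zero_of_lt {t : ℕ} [NeZero t]
    {o : (Fin 2 → ZMod t) → ℝ}
    (ho : ∀ x n r, φ.coeff n r ≠ 0 → o x ≤ n + r * torsionPoint x 0 + m * torsionPoint x 0 ^ 2)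
    (hlt : k * (t ^ 2 - 1) < 12 * ∑ x ∈ {0}ᶜ, o x) :
    ∃ x : Fin 2 → ZMod t, x ≠ 0 ∧ φ.specialization (torsionPoint x) = 0 := by
  set s : Finset (Fin 2 → ZMod t) := {0}ᶜ with hs
  have hdiff : ∀ x ∈ s, MDiff (φ.specialization (torsionPoint x)) :=
    fun x _ ↦ φ.mdifferentiable_specialization _
  have hcard : s.card = t ^ 2 - 1 := by
    simp [hs, Finset.card_compl]
  have hmod (γ : SL(2, ℤ)) (τ : ℍ) :
      ‖(∏ x ∈ s, φ.specialization (torsionPoint x)) (γ • τ)‖ =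
        ‖denom γ τ‖ ^ (k * (t ^ 2 - 1)) *
          ‖(∏ x ∈ s, φ.specialization (torsionPoint x)) τ‖ := by
    have hbij := bijective_vecMul_map_intCast t γ
    simp only [Finset.prod_apply, norm_prod, norm_specialization_torsionPoint_smul,
      Finset.prod_mul_distrib, Finset.prod_const, hcard, pow_mul]
    congr 1
    refine Finset.prod_bijective _ hbij (fun x ↦ ?_) fun x _ ↦ rfl
    simpa [hs] using (hbij.1.eq_iff' (Matrix.zero_vecMul _)).symm.not
  have hdecay : (∏ x ∈ s, φ.specialization (torsionPoint x)) =O[atImInfty]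
      fun τ ↦ rexp (-2 * π * (∑ x ∈ s, o x) * τ.im) := by
    have hprod := IsBigO.finsetProd fun x (_ : x ∈ s) ↦
      φ.isBigO_specialization (ho x)
    simpa only [Finset.prod_fn, ← Real.exp_sum, ← Finset.sum_mul, ← Finset.mul_sum] using hprod
  have hprod_zero := eq_zero_of_norm_smul_eq_of_isBigO
    (MDifferentiable.prod hdiff) hmod hdecay (by
      rwa [Nat.cast_mul, Nat.cast_pred (pow_pos (NeZero.pos t) 2), Nat.cast_pow])
  simpa [hs] using (UpperHalfPlane.prod_eq_zero_iff hdiff).1 hprod_zero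

theorem exists_toFun_div_eq_zero {t : ℕ} [NeZero t] {x : Fin 2 → ZMod t} (hx : x ≠ 0)
    (hφx : φ.specialization (torsionPoint x) = 0) :
    ∃ g : ℕ, 0 < g ∧ g < t ∧ ∀ τ : ℍ, φ.toFun τ ((g / t : ℝ) : ℂ) = 0 := by
  set p : Fin 2 → ℤ := fun i ↦ (x i).valMinAbs with hp_def
  have hp_lt (i) : (p i).natAbs < t :=
    (ZMod.natAbs_valMinAbs_le _).trans_lt (Nat.div_lt_self (NeZero.pos t) one_lt_two)
  obtain ⟨i, hi⟩ : ∃ i, p i ≠ 0 := by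
    simpa [hp_def, ZMod.valMinAbs_eq_zero] using Function.ne_iff.1 hx
  obtain ⟨γ, hγ⟩ := exists_vecMul_eq_gcd p
  have hg_dvd : ∀ i, (Int.gcd (p 0) (p 1) : ℤ) ∣ p i :=
    Fin.forall_fin_two.2 ⟨Int.gcd_dvd_left .., Int.gcd_dvd_right ..⟩
  have hg_dvd_natAbs := Int.natCast_dvd.1 (hg_dvd i)
  have hi_pos := Int.natAbs_pos.2 hi
  have hv : torsionPoint x ᵥ* γ.1.map (↑) = ![0, (Int.gcd (p 0) (p 1) / t : ℝ)] := by
    rw [torsionPoint_vecMul_map_intCast, hγ]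
    exact funext (Fin.forall_fin_two.2 ⟨by simp, by simp⟩)
  refine ⟨Int.gcd (p 0) (p 1), Nat.pos_of_dvd_of_pos hg_dvd_natAbs hi_pos,
    (Nat.le_of_dvd hi_pos hg_dvd_natAbs).trans_lt (hp_lt i), fun τ ↦ ?_⟩
  have hzero := φ.specialization_smul (torsionPoint x) γ τ
  rw [hφx, hv, specialization_zero_left, Pi.zero_apply, zero_eq_mul] at hzero
  exact hzero.resolve_left (pow_ne_zero _ (denom_ne_zero _ _))

theorem exists_toFun_div_prime_eq_zero {ν p : ℕ} (hp : p.Prime) (hp_odd : Odd p) (hνm : ν ≤ m)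
    (hmk : m * k < 6 * ν ^ 2) (hpν : 12 * m * ν < p ^ 2)
    (horder : ∀ (n : ℕ) (r : ℤ), n < ν → φ.coeff n r = 0) :
    ∃ q : ℚ, q.den = p ∧ 0 ≤ q ∧ q ≤ 1 ∧ ∀ τ : ℍ, φ.toFun τ q = 0 := by
  have : NeZero p := ⟨hp.ne_zero⟩
  have hm : 0 < m := Nat.pos_of_ne_zero fun hm ↦ by simp_all
  obtain ⟨x, hx, hφx⟩ := φ.exists_specialization_torsionPoint_eq_zero_of_lt
    (fun x _ _ ↦ φ.max_sub_le_of_coeff_ne_zero hm hνm horder (abs_torsionPoint_le_one x 0))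
    (weight_lt_sum_max_sub_torsionPoint hp_odd hνm hmk hpν)
  obtain ⟨g, hg_pos, hg_lt, hg⟩ := φ.exists_toFun_div_eq_zero hx hφx
  have hcoprime := (Nat.coprime_of_lt_prime hg_pos.ne' hg_lt hp).symm
  have hden : ((g / p : ℚ).den : ℤ) = p :=
    Rat.den_div_eq_of_coprime (a := g) (b := p) (mod_cast hp.pos) (by simpa using hcoprime)
  exact ⟨g / p, mod_cast hden, by positivity,
    div_le_one_of_le₀ (mod_cast hg_lt.le) p.cast_nonneg, fun τ ↦ by simpa using hg τ⟩

theorem toFun_eq_zero_of_lt {ν : ℕ} (hνm : ν ≤ m) (hmk : m * k < 6 * ν ^ 2)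
    (horder : ∀ (n : ℕ) (r : ℤ), n < ν → φ.coeff n r = 0) (τ z : ℂ) (hτ : 0 < τ.im) :
    φ.toFun τ z = 0 := by
  have hentire : Differentiable ℂ (φ.toFun τ) := differentiableOn_univ.1 <|
    φ.differentiableOn_toFun_comp (g := fun _ ↦ τ) isOpen_univ (differentiableOn_const τ)
      differentiableOn_id fun _ _ ↦ hτ
  have hdens : (Rat.den '' {q : ℚ | 0 ≤ q ∧ q ≤ 1 ∧ φ.toFun τ q = 0}).Infinite := by
    refine Set.infinite_of_forall_exists_gt fun a ↦ ?_
    obtain ⟨p, hp_gt, hp⟩ := Nat.exists_infinite_primes (a + 12 * m * ν + 3)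
    obtain ⟨q, hq_den, hq₀, hq₁, hq⟩ := φ.exists_toFun_div_prime_eq_zero hp
      (hp.odd_of_ne_two (by lia)) hνm hmk (by nlinarith) horder
    exact ⟨p, ⟨q, ⟨hq₀, hq₁, hq ⟨τ, hτ⟩⟩, hq_den⟩, by lia⟩
  have hzeros : (Metric.closedBall 0 1 ∩ φ.toFun τ ⁻¹' {0}).Infinite := by
    refine (hdens.of_image.image (Rat.cast_injective (α := ℂ)).injOn).mono ?_
    rintro _ ⟨q, ⟨hq₀, hq₁, hq⟩, rfl⟩
    refine ⟨?_, hq⟩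
    rw [mem_closedBall_zero_iff, ← ofReal_ratCast, norm_real, Real.norm_of_nonneg (mod_cast hq₀)]
    exact mod_cast hq₁
  exact congrFun (eq_zero_of_infinite_inter_preimage_zero hentire
    (isCompact_closedBall 0 1) hzeros) z

end JacobiForm

theorem jacobi_vanishing_order_general {k m ν : ℕ} (hνm : ν ≤ m) (hmk : m * k < 6 * ν ^ 2)
    (φ : JacobiForm k m) (horder : ∀ (n : ℕ) (r : ℤ), n < ν → φ.coeff n r = 0) :
    (∀ (n : ℕ) (r : ℤ), φ.coeff n r = 0) ∧ ∀ τ z : ℂ, 0 < τ.im → φ.toFun τ z = 0 :=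
  have hzero := φ.toFun_eq_zero_of_lt hνm hmk horder
  ⟨φ.coeff_eq_zero_of_toFun_eq_zero hzero, hzero⟩

/-- If `ν > Nk/6`, then any Jacobi form of weight `k` and index `Nν` whose Fourier
expansion vanishes to order at least `ν` in `q` is identically zero:
`J_{k,Nν}(ν) = {0}`. -/
theorem jacobi_vanishing_order (k N ν : ℕ) (hk : 0 < k) (hN : 0 < N) (hν : 0 < ν)
    (hbig : (N : ℚ) * k / 6 < (ν : ℚ))
    (φ : JacobiForm k (N * ν))
    (horder : ∀ (n : ℕ) (r : ℤ), n < ν → φ.coeff n r = 0) :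
    (∀ (n : ℕ) (r : ℤ), φ.coeff n r = 0) ∧
      ∀ τ z : ℂ, 0 < τ.im → φ.toFun τ z = 0 := by
  have hNk : N * k < 6 * ν := by exact_mod_cast (div_lt_iff₀' (by norm_num)).1 hbig
  exact jacobi_vanishing_order_general (Nat.le_mul_of_pos_left ν hN) (by nlinarith) φ horder
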